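/- There exists a constant c > 0 such that the following holds: for every n ≥ 1, every symmetric Boolean function f : {-1,1}^n → {-1,1} with associated univariate predicate F, and every integer t with 1 ≤ t ≤ n and F(t−1) ≠ F(t), one has deg_{1/3}(f) ≥ c·√(t·(n−t+1)). -/

import Mathlib

/-! Write `s = t - 1`. A polynomial of degree `d` approximating `f` on the cube symmetrises
(Minsky–Papert) to a univariate polynomial `q` of degree at most `d` with `|q(k) - F(k)| ≤ 1/3` for
`0 ≤ k ≤ n`. So `q` is bounded by `4/3` on these integers and has a sign change of size at least
`4/3` between `s` and `s + 1`; the claim becomes `(s + 1)(n - s) = O(d²)` for such `q`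
(`degree_sq_ge`). By the reflection `k ↦ n - k` one may assume `s + 1 ≤ (n + 1)/2`.

The proof replaces pointwise (Markov–Bernstein) derivative estimates by an `ℓ²` estimate on the
integer points. The discrete Legendre operator attached to the Dirichlet form
`∑ (k + 1)(n - k)(q(k + 1) - q(k))²` is triangular in the basis of binomial coefficients, with
eigenvalues `j(j + 1)`, hence the form is at most `e(e + 1) ∑ q(k)²` on polynomials of degree at
most `e` (`legendre_ineq`). Alone this loses a factor, since `∑ q(k)²` may be of order `n`. So `q`
is multiplied by a localising kernel `K` of degree `2m`, the square of the normalised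
Christoffel–Darboux kernel of the Chebyshev polynomials at `s + 1`, which equals `1` at `s + 1` and
decays away from it at the scale `√(sn)/m` (`exists_kernel`). If `d < m ≈ √(sn)/A`, the sum
`∑ (qK)(k)²` is `O(A)`, so the form is `O(A m²) = O(sn/A)`, while the single term at `k = s` is
already of order `sn`: a contradiction for a large constant `A` (`degree_ge_of_scale`).

The decay needs `s + 1 ≥ A²`. For smaller `s`, the polynomial `q(s + (x - J)²)` with `J ≈ √(n - s)`
has degree at most `2d` and jumps in the middle of `[0, 2J]`, where the previous case applies
(`degree_sq_ge_of_left`).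
-/


/-- The `ε`-approximate degree of a function on the Boolean cube `{-1,1}^n`. -/
noncomputable def approxDeg {n : ℕ} (f : (Fin n → ℝ) → ℝ) (ε : ℝ) : ℕ :=
  sInf {d : ℕ | ∃ p : MvPolynomial (Fin n) ℝ, p.totalDegree ≤ d ∧
    ∀ x : Fin n → ℝ, (∀ i, x i = 1 ∨ x i = -1) → |MvPolynomial.eval x p - f x| ≤ ε}

section Helpers

open Finset Polynomial

/-! ### Christoffel–Darboux kernel for Chebyshev polynomials -/

/-- Christoffel–Darboux identity for the Chebyshev polynomials of the first kind. -/
lemma christoffel_darboux (x y : ℝ) (m : ℕ) :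
    (x - y) * (1 + 2 * ∑ j ∈ range m, (Chebyshev.T ℝ (j + 1 : ℕ)).eval x *
      (Chebyshev.T ℝ (j + 1 : ℕ)).eval y) =
    (Chebyshev.T ℝ (m + 1 : ℕ)).eval x * (Chebyshev.T ℝ m).eval y -
      (Chebyshev.T ℝ m).eval x * (Chebyshev.T ℝ (m + 1 : ℕ)).eval y := by
  induction m with
  | zero => simp
  | succ m ih =>
    have hT : ∀ z : ℝ, (Chebyshev.T ℝ (m + 1 + 1 : ℕ)).eval z =
        2 * z * (Chebyshev.T ℝ (m + 1 : ℕ)).eval z - (Chebyshev.T ℝ m).eval z := by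
      intro z
      have := Chebyshev.T_add_two ℝ m
      rw [show ((m + 1 + 1 : ℕ) : ℤ) = m + 2 by push_cast; ring, this]
      simp
    rw [sum_range_succ, hT, hT]
    linear_combination ih

/-- A bound on the numerator of the Christoffel–Darboux kernel which is uniform in `m`: with
`x = cos (p + q)` and `y = cos (p - q)` it is a combination of `sin p` and `sin q` with
coefficients of modulus at most one. -/
lemma cheb_wronskian_sq (x y : ℝ) (hx : |x| ≤ 1) (hy : |y| ≤ 1) (m : ℕ) :
    ((Chebyshev.T ℝ (m + 1 : ℕ)).eval x * (Chebyshev.T ℝ m).eval y -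
      (Chebyshev.T ℝ m).eval x * (Chebyshev.T ℝ (m + 1 : ℕ)).eval y) ^ 2 ≤ 2 * (1 - x * y) := by
  obtain ⟨hx1, hx2⟩ := abs_le.1 hx
  obtain ⟨hy1, hy2⟩ := abs_le.1 hy
  set a := Real.arccos x with ha
  set b := Real.arccos y with hb
  have hxa : x = Real.cos a := (Real.cos_arccos hx1 hx2).symm
  have hyb : y = Real.cos b := (Real.cos_arccos hy1 hy2).symm
  rw [hxa, hyb]
  simp only [Chebyshev.T_real_cos]
  push_cast
  -- halve the angles: `a = p + q`, `b = p - q`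
  set p := (a + b) / 2 with hp
  set q := (a - b) / 2 with hq
  have e1 : Real.cos ((m + 1) * a) * Real.cos (m * b) - Real.cos (m * a) * Real.cos ((m + 1) * b) =
      - (Real.sin ((2 * m + 1) * p) * Real.sin q + Real.sin ((2 * m + 1) * q) * Real.sin p) := by
    have h1 : (m + 1) * a = ((2 * m + 1) * p + q) / 2 + ((2 * m + 1) * q + p) / 2 := by
      rw [hp, hq]; ring
    have h2 : m * b = ((2 * m + 1) * p - p) / 2 - ((2 * m + 1) * q - q) / 2 := by
      rw [hp, hq]; ring
    have h3 : m * a = ((2 * m + 1) * p - p) / 2 + ((2 * m + 1) * q - q) / 2 := by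
      rw [hp, hq]; ring
    have h4 : (m + 1) * b = ((2 * m + 1) * p - q) / 2 - ((2 * m + 1) * q - p) / 2 := by
      rw [hp, hq]; ring
    have g1 := Real.cos_sub_cos ((m + 1) * a + m * b) (m * a + (m + 1) * b)
    have g2 := Real.cos_sub_cos ((m + 1) * a - m * b) (m * a - (m + 1) * b)
    rw [show ((m + 1) * a + m * b + (m * a + (m + 1) * b)) / 2 = (2 * m + 1) * p by rw [hp]; ring,
      show ((m + 1) * a + m * b - (m * a + (m + 1) * b)) / 2 = q by rw [hq]; ring] at g1
    rw [show ((m + 1) * a - m * b + (m * a - (m + 1) * b)) / 2 = (2 * m + 1) * q by rw [hq]; ring,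
      show ((m + 1) * a - m * b - (m * a - (m + 1) * b)) / 2 = p by rw [hp]; ring] at g2
    rw [Real.cos_add, Real.cos_add] at g1
    rw [Real.cos_sub, Real.cos_sub] at g2
    linarith
  have e2 : 2 * (1 - Real.cos a * Real.cos b) = 2 * (Real.sin p ^ 2 + Real.sin q ^ 2) := by
    rw [show a = p + q by rw [hp, hq]; ring, show b = p - q by rw [hp, hq]; ring,
      Real.cos_add, Real.cos_sub]
    have s1 := Real.sin_sq_add_cos_sq p
    have s2 := Real.sin_sq_add_cos_sq q
    linear_combination (-2 * Real.cos q ^ 2) * s1 - 2 * (1 - Real.sin p ^ 2) * s2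
  rw [e1, e2]
  have u1 := Real.sin_sq_le_one ((2 * m + 1) * p)
  have u2 := Real.sin_sq_le_one ((2 * m + 1) * q)
  have k1 : (Real.sin ((2 * m + 1) * p) * Real.sin q) ^ 2 ≤ Real.sin q ^ 2 := by
    rw [mul_pow]; nlinarith [sq_nonneg (Real.sin q)]
  have k2 : (Real.sin ((2 * m + 1) * q) * Real.sin p) ^ 2 ≤ Real.sin p ^ 2 := by
    rw [mul_pow]; nlinarith [sq_nonneg (Real.sin p)]
  nlinarith [sq_nonneg (Real.sin ((2 * m + 1) * p) * Real.sin q -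
    Real.sin ((2 * m + 1) * q) * Real.sin p)]

/-- The diagonal of the Christoffel–Darboux kernel grows linearly: `T_j(y)` and
`T_{2j}(y) = 2 T_j(y)² - 1` cannot both be small. -/
lemma cheb_sum_lower (y : ℝ) (m : ℕ) (hm : 1 ≤ m) :
    (m : ℝ) / 5 ≤ 1 + 2 * ∑ j ∈ range m, (Chebyshev.T ℝ (j + 1 : ℕ)).eval y *
      (Chebyshev.T ℝ (j + 1 : ℕ)).eval y := by
  set g : ℕ → ℝ := fun j => (Chebyshev.T ℝ j).eval y * (Chebyshev.T ℝ j).eval y with hg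
  have hg0 : ∀ j, 0 ≤ g j := fun j => mul_self_nonneg _
  have hpair : ∀ j, 7 / 16 ≤ g j + g (2 * j) := by
    intro j
    have h2 : (Chebyshev.T ℝ (2 * j : ℕ)).eval y = 2 * ((Chebyshev.T ℝ j).eval y) ^ 2 - 1 := by
      have := Chebyshev.T_mul ℝ 2 j
      rw [show ((2 * j : ℕ) : ℤ) = 2 * j by push_cast; ring, this]
      simp [Chebyshev.T_two]
    simp only [hg, h2]
    -- with `u = T_j(y)²`, `u + (2 u - 1)²` has its minimum `7/16` at `u = 3/8`
    nlinarith [sq_nonneg (8 * ((Chebyshev.T ℝ j).eval y) ^ 2 - 3)]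
  have hS : ∑ j ∈ range m, g (j + 1) = ∑ j ∈ Icc 1 m, g j := by
    rw [← Finset.sum_image (f := g) (s := range m) (g := fun j => j + 1) (by intro a _ b _ h; simpa using h)]
    congr 1
    ext k; simp only [mem_image, mem_range, mem_Icc]
    exact ⟨by rintro ⟨a, h, rfl⟩; omega, fun h => ⟨k - 1, by omega, by omega⟩⟩
  have h1 : ∑ j ∈ Icc 1 (m / 2), g j ≤ ∑ j ∈ Icc 1 m, g j :=
    sum_le_sum_of_subset_of_nonneg (Icc_subset_Icc_right (by omega)) fun _ _ _ => hg0 _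
  have h2 : ∑ j ∈ Icc 1 (m / 2), g (2 * j) ≤ ∑ j ∈ Icc 1 m, g j := by
    rw [← Finset.sum_image (f := g) (g := fun j => 2 * j) (by intro a _ b _ h; simpa using h)]
    refine sum_le_sum_of_subset_of_nonneg ?_ fun _ _ _ => hg0 _
    intro k; simp only [mem_image, mem_Icc]
    rintro ⟨a, h, rfl⟩; omega
  have h3 : ((m / 2 : ℕ) : ℝ) * (7 / 16) ≤ ∑ j ∈ Icc 1 (m / 2), (g j + g (2 * j)) := by
    have := Finset.card_nsmul_le_sum (Icc 1 (m / 2)) (fun j => g j + g (2 * j)) (7 / 16)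
      (fun j _ => hpair j)
    simpa using this
  rw [sum_add_distrib] at h3
  have h4 : (m : ℝ) ≤ 2 * ((m / 2 : ℕ) : ℝ) + 1 := by
    have : m ≤ 2 * (m / 2) + 1 := by omega
    exact_mod_cast this
  have h5 : 1 + 2 * ∑ j ∈ range m, g (j + 1) ≥ m / 5 := by
    rw [hS]; linarith
  exact h5

/-- Localising kernel at the integer `t`: a polynomial with value `1` at `t` which, on the
integers of `[0, n]`, is nonnegative, bounded, and decays away from `t`. It is the square of the
Christoffel–Darboux kernel at `t`, normalised on the diagonal, after the affine change of variable
`k ↦ 1 - 2k/n` sending `[0, n]` to `[-1, 1]`. -/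
lemma exists_kernel (n t m : ℕ) (hn : 1 ≤ n) (ht : t ≤ n) (hm : 1 ≤ m) :
    ∃ K : ℝ[X], K.natDegree ≤ 2 * m ∧ K.eval (t : ℝ) = 1 ∧ ∀ k : ℕ, k ≤ n →
      0 ≤ K.eval (k : ℝ) ∧ K.eval (k : ℝ) ≤ 225 ∧
      K.eval (k : ℝ) * ((k : ℝ) - t) ^ 2 * m ^ 2 ≤ 25 * n * (k + t) := by
  have hn0 : (0 : ℝ) < n := by exact_mod_cast hn
  have hm0 : (1 : ℝ) ≤ m := by exact_mod_cast hm
  set y : ℝ := 1 - 2 / n * t with hy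
  have hnode : ∀ k : ℕ, k ≤ n → |1 - 2 / (n : ℝ) * k| ≤ 1 := by
    intro k hk
    have h1 : (k : ℝ) / n ≤ 1 := by rw [div_le_one hn0]; exact_mod_cast hk
    have h2 : 0 ≤ (k : ℝ) / n := by positivity
    rw [abs_le, show 2 / (n : ℝ) * k = 2 * (k / n) by ring]
    constructor <;> linarith
  set r : ℝ := 1 + 2 * ∑ j ∈ range m, (Chebyshev.T ℝ (j + 1 : ℕ)).eval y *
      (Chebyshev.T ℝ (j + 1 : ℕ)).eval y with hr
  have hrm : (m : ℝ) / 5 ≤ r := cheb_sum_lower y m hm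
  have hr0 : 0 < r := by linarith [show (0 : ℝ) < m / 5 by positivity]
  set R : ℝ[X] := 1 + C 2 * ∑ j ∈ range m, Chebyshev.T ℝ (j + 1 : ℕ) *
    C ((Chebyshev.T ℝ (j + 1 : ℕ)).eval y) with hR
  have hRe : ∀ x, R.eval x = 1 + 2 * ∑ j ∈ range m, (Chebyshev.T ℝ (j + 1 : ℕ)).eval x *
      (Chebyshev.T ℝ (j + 1 : ℕ)).eval y := by
    intro x; simp [hR, eval_finsetSum]
  have hRd : R.natDegree ≤ m := by
    refine natDegree_add_le_of_degree_le (by simp) ((natDegree_C_mul_le _ _).trans ?_)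
    refine natDegree_sum_le_of_forall_le _ _ fun j hj => (natDegree_mul_C_le _ _).trans ?_
    rw [Chebyshev.natDegree_T]
    simp at hj ⊢; omega
  refine ⟨(C (1 / r) * R.comp (C 1 - C (2 / (n : ℝ)) * X)) ^ 2, ?_, ?_, ?_⟩
  · refine natDegree_pow_le.trans (Nat.mul_le_mul_left 2 ((natDegree_C_mul_le _ _).trans ?_))
    refine natDegree_comp_le.trans ?_
    have : (C 1 - C (2 / (n : ℝ)) * X).natDegree ≤ 1 := by compute_degree
    calc _ ≤ m * 1 := Nat.mul_le_mul hRd this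
      _ = m := mul_one m
  · simp only [eval_pow, eval_mul, eval_C, eval_comp, eval_sub, eval_X]
    rw [← hy, hRe, ← hr]; field_simp
  · intro k hk
    have hx := hnode k hk
    have hy1 := hnode t ht
    rw [← hy] at hy1
    simp only [eval_pow, eval_mul, eval_C, eval_comp, eval_sub, eval_X]
    set x : ℝ := 1 - 2 / n * k with hxdef
    have hcd := christoffel_darboux x y m
    have hw := cheb_wronskian_sq x y hx hy1 m
    rw [← hcd, ← hRe, mul_pow] at hw
    have hRabs : |R.eval x| ≤ 3 * m := by
      rw [hRe]
      have : |∑ j ∈ range m, (Chebyshev.T ℝ (j + 1 : ℕ)).eval x *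
          (Chebyshev.T ℝ (j + 1 : ℕ)).eval y| ≤ ∑ j ∈ range m, (1 : ℝ) := by
        refine (abs_sum_le_sum_abs _ _).trans (sum_le_sum fun j _ => ?_)
        rw [abs_mul]
        exact mul_le_one₀ (Chebyshev.abs_eval_T_real_le_one _ hx) (abs_nonneg _)
          (Chebyshev.abs_eval_T_real_le_one _ hy1)
      rw [sum_const, card_range, nsmul_eq_mul, mul_one] at this
      have h := abs_le.1 this
      rw [abs_le]; constructor <;> linarith [h.1, h.2]
    refine ⟨by positivity, ?_, ?_⟩
    · rw [← sq_abs, show (225 : ℝ) = 15 ^ 2 by norm_num]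
      gcongr
      rw [abs_mul, abs_of_pos (by positivity), one_div, inv_mul_le_iff₀ hr0]
      linarith
    · have hrr : (m : ℝ) ^ 2 ≤ 25 * r ^ 2 := by nlinarith
      have hxy : x - y = 2 / n * (t - k) := by rw [hxdef, hy]; ring
      have h1xy : 1 - x * y ≤ 2 / n * (k + t) := by
        have : 0 ≤ 2 / (n : ℝ) * k * (2 / n * t) := by positivity
        rw [hxdef, hy]; nlinarith
      have key : (((k : ℝ) - t) ^ 2) * R.eval x ^ 2 ≤ n * (k + t) := by
        rw [hxy] at hw
        have h3 : (2 / (n : ℝ) * (t - k)) ^ 2 * R.eval x ^ 2 ≤ 2 * (2 / n * (k + t)) := by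
          linarith
        have h4 : (n : ℝ) ^ 2 / 4 * ((2 / (n : ℝ) * (t - k)) ^ 2 * R.eval x ^ 2) ≤
            (n : ℝ) ^ 2 / 4 * (2 * (2 / n * (k + t))) := by gcongr
        have e1 : (n : ℝ) ^ 2 / 4 * ((2 / (n : ℝ) * (t - k)) ^ 2 * R.eval x ^ 2) =
          (((k : ℝ) - t) ^ 2) * R.eval x ^ 2 := by field_simp; ring
        have e2 : (n : ℝ) ^ 2 / 4 * (2 * (2 / n * (k + t))) = n * (k + t) := by field_simp; ring
        linarith
      calc (1 / r * R.eval x) ^ 2 * ((k : ℝ) - t) ^ 2 * (m : ℝ) ^ 2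
          = (((k : ℝ) - t) ^ 2 * R.eval x ^ 2) * ((m : ℝ) ^ 2 / r ^ 2) := by
            field_simp
        _ ≤ ((n : ℝ) * (k + t)) * 25 := by
            gcongr
            rw [div_le_iff₀ (by positivity)]; exact hrr
        _ = _ := by ring


/-! ### The discrete Legendre operator -/

/-- If a symmetric form `B` is represented by an operator which is triangular in the sequence `b`
with diagonal entries `μ j`, then `B v v ≤ M ‖v‖²` on the span of `b j`, `j < e`, whenever `M`
bounds the corresponding `μ j`: Gram–Schmidt turns `b` into eigenvectors, and no linear independence
of `b` is needed. -/
lemma spectral_bound {E : Type*} [NormedAddCommGroup E] [InnerProductSpace ℝ E]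
    [FiniteDimensional ℝ E] (B : E →ₗ[ℝ] E →ₗ[ℝ] ℝ) (hB : ∀ v w, B v w = B w v)
    (b : ℕ → E) (μ : ℕ → ℝ)
    (hb : ∀ e, ∃ s ∈ Submodule.span ℝ (b '' Set.Iio e),
      ∀ w, B (b e) w = μ e * inner ℝ (b e) w + inner ℝ s w)
    (e : ℕ) (M : ℝ) (hM : ∀ j < e, μ j ≤ M) (v : E)
    (hv : v ∈ Submodule.span ℝ (b '' Set.Iio e)) :
    B v v ≤ M * inner ℝ v v := by
  -- `B w ·` is represented by a vector of the same subspace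
  have key : ∀ e, ∀ w ∈ Submodule.span ℝ (b '' Set.Iio e),
      ∃ s ∈ Submodule.span ℝ (b '' Set.Iio e), ∀ x, B w x = inner ℝ s x := by
    intro e w hw
    induction hw using Submodule.span_induction with
    | mem x hx =>
      obtain ⟨j, hj, rfl⟩ := hx
      obtain ⟨s, hs, h⟩ := hb j
      refine ⟨μ j • b j + s, Submodule.add_mem _ (Submodule.smul_mem _ _
        (Submodule.subset_span ⟨j, hj, rfl⟩)) (Submodule.span_mono ?_ hs), fun w => ?_⟩
      · exact Set.image_mono (Set.Iio_subset_Iio (le_of_lt hj))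
      · rw [h, inner_add_left, real_inner_smul_left]
    | zero => exact ⟨0, Submodule.zero_mem _, by simp⟩
    | add x y _ _ hx hy =>
      obtain ⟨s, hs, h⟩ := hx
      obtain ⟨s', hs', h'⟩ := hy
      exact ⟨s + s', Submodule.add_mem _ hs hs', fun w => by simp [h, h', inner_add_left]⟩
    | smul a x _ hx =>
      obtain ⟨s, hs, h⟩ := hx
      exact ⟨a • s, Submodule.smul_mem _ _ hs, fun w => by simp [h, real_inner_smul_left]⟩
  induction e generalizing v with
  | zero =>
    have : v = 0 := by simpa using hv
    simp [this]
  | succ e ih =>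
    set W := Submodule.span ℝ (b '' Set.Iio e) with hW
    have hr : W.starProjection v ∈ W := W.starProjection_apply_mem v
    set r := W.starProjection v
    set u := v - r with hu
    have huo : ∀ w ∈ W, inner ℝ w u = 0 := W.sub_starProjection_mem_orthogonal v
    have hsplit : b '' Set.Iio (e + 1) = insert (b e) (b '' Set.Iio e) := by
      rw [← Set.image_insert_eq]; congr 1; ext j; simp
    have huW : ∃ a : ℝ, ∃ w ∈ W, u = a • b e + w := by
      rw [hsplit, Submodule.mem_span_insert] at hv
      obtain ⟨a, z, hz, h⟩ := hv
      exact ⟨a, z - r, Submodule.sub_mem _ hz hr, by rw [hu, h]; abel⟩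
    obtain ⟨a, w, hw, hau⟩ := huW
    obtain ⟨s, hs, hs'⟩ := hb e
    obtain ⟨s1, hs1, hs1'⟩ := key e w hw
    obtain ⟨s2, hs2, hs2'⟩ := key e r hr
    -- the component `u` of `v` orthogonal to `W` behaves as an eigenvector for `μ e`
    have h1 : B u u = μ e * inner ℝ u u := by
      have e1 : B u u = a * (μ e * inner ℝ (b e) u + inner ℝ s u) + inner ℝ s1 u := by
        conv_lhs => rw [show B u = a • B (b e) + B w by rw [hau]; simp]
        simp [hs', hs1']
      have e2 : inner ℝ u u = a * inner ℝ (b e) u + inner ℝ w u := by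
        conv_lhs => rw [show inner ℝ u u = inner ℝ (a • b e + w) u by rw [← hau]]
        rw [inner_add_left, real_inner_smul_left]
      rw [huo s hs, huo s1 hs1] at e1
      rw [huo w hw] at e2
      rw [e1, e2]; ring
    have h2 : B r u = 0 := by rw [hs2', huo s2 hs2]
    have h3 := ih (fun j hj => hM j (by omega)) r hr
    have hvv : v = u + r := by rw [hu]; abel
    have e3 : B v v = B u u + B r r := by
      rw [hvv]; simp only [map_add, LinearMap.add_apply]; rw [hB u r, h2]; ring
    have e4 : inner ℝ v v = inner ℝ u u + inner ℝ r r := by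
      rw [hvv]; simp only [inner_add_left, inner_add_right]
      rw [real_inner_comm r u, huo r hr]; ring
    have h5 : 0 ≤ inner ℝ u u := real_inner_self_nonneg
    have h6 := hM e (by omega)
    rw [e3, e4, h1]
    nlinarith

/-- Summation by parts for the weighted Dirichlet form; `v (0 - 1)` is the junk value `v 0`, which is
harmless because it is multiplied by `c 0 = 0`. -/
lemma sum_parts (c v w : ℕ → ℝ) (h0 : c 0 = 0) (N : ℕ) :
    ∑ k ∈ Finset.range N, c (k + 1) * (v (k + 1) - v k) * (w (k + 1) - w k) =
      ∑ k ∈ Finset.range (N + 1), (c k * (v k - v (k - 1)) - c (k + 1) * (v (k + 1) - v k)) * w k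
        + c (N + 1) * (v (N + 1) - v N) * w N := by
  induction N with
  | zero => simp [h0]
  | succ N ih =>
    rw [Finset.sum_range_succ, ih, Finset.sum_range_succ _ (N + 1)]
    simp only [Nat.add_sub_cancel]; ring

/-- The discrete Legendre operator with weight `c k = k (n + 1 - k)` maps `k ↦ C(k, e + 1)` to
`(e + 1)(e + 2)` times itself plus a multiple of `k ↦ C(k, e)`. -/
lemma choose_eigen (n e k : ℕ) :
    (k : ℝ) * (n + 1 - k) * ((k.choose (e + 1) : ℝ) - (k - 1).choose (e + 1))
      - (k + 1) * (n - k) * (((k + 1).choose (e + 1) : ℝ) - k.choose (e + 1)) =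
    (e + 1) * (e + 2) * k.choose (e + 1) - (e + 1) * (n - e) * k.choose e := by
  have h1 : (k + 1 : ℝ) * k.choose e = (k + 1).choose (e + 1) * (e + 1) := by
    exact_mod_cast Nat.add_one_mul_choose_eq k e
  have h2 : (k : ℝ) * ((k.choose (e + 1) : ℝ) - (k - 1).choose (e + 1)) =
      k.choose (e + 1) * (e + 1) := by
    rcases k with _ | k
    · simp
    · have := Nat.add_one_mul_choose_eq k e
      have h3 : ((k + 1 : ℕ) : ℝ) * k.choose e = (k + 1).choose (e + 1) * (e + 1) := by
        exact_mod_cast this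
      rw [Nat.add_sub_cancel]
      rw [← h3, Nat.choose_succ_succ k e]; push_cast; ring
  have h3 : ((k + 1).choose (e + 1) : ℝ) = k.choose e + k.choose (e + 1) := by
    rw [Nat.choose_succ_succ]; push_cast; ring
  rw [h3] at h1 ⊢
  linear_combination (n + 1 - k : ℝ) * h2 - (n - k : ℝ) * h1 + (e + 1) * h1

/-- The inequality `legendre_ineq` for a function given by its binomial expansion. -/
lemma legendre_aux (n e : ℕ) (v : ℕ → ℝ) (M : ℝ) (hM : ∀ j < e, (j : ℝ) * (j + 1) ≤ M)
    (a : ℕ → ℝ) (hv : ∀ k ≤ n, v k = ∑ j ∈ range e, a j * k.choose j) :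
    ∑ k ∈ range n, ((k : ℝ) + 1) * (n - k) * (v (k + 1) - v k) ^ 2 ≤
      M * ∑ k ∈ range (n + 1), v k ^ 2 := by
  let B : EuclideanSpace ℝ (Fin (n + 1)) →ₗ[ℝ] EuclideanSpace ℝ (Fin (n + 1)) →ₗ[ℝ] ℝ :=
    LinearMap.mk₂ ℝ (fun v w => ∑ k : Fin n,
      ((k : ℝ) + 1) * (n - k) * (v k.succ - v k.castSucc) * (w k.succ - w k.castSucc))
      (fun x y z => by
        rw [← sum_add_distrib]; refine sum_congr rfl fun k _ => ?_; simp; ring)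
      (fun c x y => by
        rw [smul_eq_mul, mul_sum]; refine sum_congr rfl fun k _ => ?_; simp; ring)
      (fun x y z => by
        rw [← sum_add_distrib]; refine sum_congr rfl fun k _ => ?_; simp; ring)
      (fun c x y => by
        rw [smul_eq_mul, mul_sum]; refine sum_congr rfl fun k _ => ?_; simp; ring)
  have hBdef : ∀ v w, B v w = ∑ k : Fin n,
      ((k : ℝ) + 1) * (n - k) * (v k.succ - v k.castSucc) * (w k.succ - w k.castSucc) :=
    fun v w => rfl
  let b : ℕ → EuclideanSpace ℝ (Fin (n + 1)) := fun j =>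
    WithLp.toLp 2 (fun k => ((k : ℕ).choose j : ℝ))
  have hbdef : ∀ j k, b j k = ((k : ℕ).choose j : ℝ) := fun j k => rfl
  have hin : ∀ v w : EuclideanSpace ℝ (Fin (n + 1)), inner ℝ v w = ∑ k, v k * w k := by
    intro v w
    simp [PiLp.inner_apply, mul_comm]
  have main := spectral_bound B (fun v w => by
      rw [hBdef, hBdef]; exact sum_congr rfl fun k _ => by ring) b
      (fun j => (j : ℝ) * (j + 1)) (fun j => by
        rcases j with _ | j
        · exact ⟨0, Submodule.zero_mem _, fun w => by simp [hBdef, hbdef]⟩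
        · refine ⟨(-((j + 1) * (n - j)) : ℝ) • b j, Submodule.smul_mem _ _
            (Submodule.subset_span ⟨j, by simp, rfl⟩), fun w => ?_⟩
          obtain ⟨W, hW⟩ : ∃ W : ℕ → ℝ, ∀ k : Fin (n + 1), w k = W k :=
            ⟨fun k => if h : k < n + 1 then w ⟨k, h⟩ else 0, fun k => by simp [k.2]⟩
          rw [real_inner_smul_left, hin, hin, hBdef]
          simp only [hbdef, hW, Fin.val_succ, Fin.val_castSucc]
          rw [Fin.sum_univ_eq_sum_range (fun k => ((k : ℝ) + 1) * (n - k) *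
            (((k + 1).choose (j + 1) : ℝ) - (k.choose (j + 1))) * (W (k + 1) - W k)),
            Fin.sum_univ_eq_sum_range (fun k => ((k.choose (j + 1) : ℝ)) * W k),
            Fin.sum_univ_eq_sum_range (fun k => ((k.choose j : ℝ)) * W k)]
          have := sum_parts (fun k => (k : ℝ) * (n + 1 - k)) (fun k => (k.choose (j + 1) : ℝ))
            W (by simp) n
          simp only [Nat.cast_add, Nat.cast_one, add_sub_add_right_eq_sub] at this
          rw [this, sub_self, mul_zero, zero_mul, zero_mul, add_zero, mul_sum, mul_sum,
            ← sum_add_distrib]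
          refine sum_congr rfl fun k _ => ?_
          rw [choose_eigen]; push_cast; ring)
      e M hM (WithLp.toLp 2 (fun k : Fin (n + 1) => v k)) (by
        have : (WithLp.toLp 2 (fun k : Fin (n + 1) => v k)) = ∑ j ∈ range e, a j • b j := by
          ext k
          simp [hbdef, hv k (by omega)]
        rw [this]
        exact Submodule.sum_mem _ fun j hj => Submodule.smul_mem _ _
          (Submodule.subset_span ⟨j, by simpa using hj, rfl⟩))
  rw [hBdef, hin] at main
  simp only [Fin.val_succ, Fin.val_castSucc] at main
  rw [Fin.sum_univ_eq_sum_range (fun k => ((k : ℝ) + 1) * (n - k) *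
            (v (k + 1) - v k) * (v (k + 1) - v k)),
      Fin.sum_univ_eq_sum_range (fun k => v k * v k)] at main
  simpa only [pow_two, mul_assoc] using main

lemma exists_choose_expansion (e : ℕ) (q : ℝ[X]) (hq : q.degree < e) :
    ∃ a : ℕ → ℝ, ∀ k : ℕ, q.eval (k : ℝ) = ∑ j ∈ Finset.range e, a j * k.choose j := by
  induction e generalizing q with
  | zero =>
    have : q = 0 := by simpa using hq
    exact ⟨0, by simp [this]⟩
  | succ e ih =>
    have hmon := monic_descPochhammer ℝ e
    have hdeg : (descPochhammer ℝ e).natDegree = e := descPochhammer_natDegree ℝ e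
    have hlt : (q - C (q.coeff e) * descPochhammer ℝ e).degree < e := by
      rw [degree_lt_iff_coeff_zero] at hq ⊢
      intro m hm
      rw [coeff_sub, coeff_C_mul]
      rcases hm.eq_or_lt with rfl | hm
      · have : (descPochhammer ℝ e).coeff e = 1 := by
          have := hmon.coeff_natDegree
          rwa [hdeg] at this
        rw [this]; ring
      · rw [hq m hm, coeff_eq_zero_of_natDegree_lt (hdeg.trans_lt hm)]; ring
    obtain ⟨a, ha⟩ := ih _ hlt
    refine ⟨Function.update a e (q.coeff e * e.factorial), fun k => ?_⟩
    have := ha k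
    rw [eval_sub, eval_mul, eval_C, descPochhammer_eval_eq_descFactorial,
      Nat.descFactorial_eq_factorial_mul_choose] at this
    rw [Finset.sum_range_succ, Finset.sum_congr rfl (g := fun j => a j * (k.choose j : ℝ)), ← this]
    · simp; ring
    · intro j hj
      rw [Function.update_of_ne (by simp at hj; omega)]

/-- Discrete weighted Bernstein inequality in `ℓ²`: on polynomials of degree at most `e`, the largest
eigenvalue of the discrete Legendre Dirichlet form is at most `e (e + 1)`. -/
lemma legendre_ineq (n e : ℕ) (q : ℝ[X]) (hq : q.natDegree ≤ e) :
    ∑ k ∈ range n, ((k : ℝ) + 1) * (n - k) * (q.eval ((k : ℝ) + 1) - q.eval (k : ℝ)) ^ 2 ≤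
      e * (e + 1) * ∑ k ∈ range (n + 1), q.eval (k : ℝ) ^ 2 := by
  obtain ⟨a, ha⟩ := exists_choose_expansion (e + 1) q
    (lt_of_le_of_lt degree_le_natDegree (by exact_mod_cast Nat.lt_succ_of_le hq))
  have := legendre_aux n (e + 1) (fun k => q.eval (k : ℝ)) (e * (e + 1)) (fun j hj => by
    have : (j : ℝ) ≤ e := by exact_mod_cast Nat.le_of_lt_succ hj
    have : (0 : ℝ) ≤ j := by positivity
    gcongr) a (fun k _ => ha k)
  simpa using this

/-! ### Degree of a univariate polynomial with a jump -/

/-- `q` is bounded by `4 / 3` at the integer points of `[0, n]` and crosses zero, from modulus at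
least `2 / 3` to modulus at least `2 / 3`, between the neighbouring integers `s` and
`s + 1` of this interval. -/
def HasJump (q : ℝ[X]) (n s : ℕ) : Prop :=
  s + 1 ≤ n ∧ (∀ k : ℕ, k ≤ n → |q.eval (k : ℝ)| ≤ 4 / 3) ∧
    2 / 3 ≤ |q.eval (s : ℝ)| ∧ 2 / 3 ≤ |q.eval ((s + 1 : ℕ) : ℝ)| ∧
    q.eval (s : ℝ) * q.eval ((s + 1 : ℕ) : ℝ) ≤ 0

/-- The sum telescopes against the bounded function `z / (A + |z|)`, whose derivative is
`A / (A + |z|)²`. -/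
lemma sum_decay_le (A : ℝ) (hA : 1 ≤ A) (t N : ℕ) :
    ∑ k ∈ range N, A ^ 2 / (A + |(k : ℝ) - t|) ^ 2 ≤ 4 * A := by
  set ψ : ℕ → ℝ := fun k => ((k : ℝ) - t) / (A + |(k : ℝ) - t|) with hψ
  have hpos : ∀ z : ℝ, 0 < A + |z| := fun z => by linarith [abs_nonneg z]
  have hstep : ∀ k : ℕ, A ^ 2 / (A + |(k : ℝ) - t|) ^ 2 ≤ 2 * A * (ψ (k + 1) - ψ k) := by
    intro k
    simp only [hψ]
    push_cast
    rcases le_or_gt t k with h | h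
    · have h0 : (0 : ℝ) ≤ (k : ℝ) - t := by
        have : (t : ℝ) ≤ k := by exact_mod_cast h
        linarith
      rw [show (k : ℝ) + 1 - t = (k - t) + 1 by ring]
      generalize (k : ℝ) - t = z at h0
      rw [abs_of_nonneg h0, abs_of_nonneg (by linarith)]
      have e : (z + 1) / (A + (z + 1)) - z / (A + z) = A / ((A + z) * (A + (z + 1))) := by
        have h1 : A + z ≠ 0 := by positivity
        have h2 : A + (z + 1) ≠ 0 := by positivity
        field_simp; ring
      rw [e, ← mul_div_assoc, div_le_div_iff₀ (by positivity) (by positivity)]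
      have : 0 ≤ A ^ 2 * (A + z) := by positivity
      nlinarith
    · have h0 : (k : ℝ) - t ≤ -1 := by
        have : (k : ℝ) + 1 ≤ t := by exact_mod_cast h
        linarith
      rw [show (k : ℝ) + 1 - t = (k - t) + 1 by ring]
      obtain ⟨z, hz⟩ : ∃ z, (k : ℝ) - t = -z := ⟨-((k : ℝ) - t), by ring⟩
      rw [hz] at h0 ⊢
      have hz1 : 1 ≤ z := by linarith
      rw [abs_of_nonpos (by linarith), abs_of_nonpos (by linarith)]
      have h1 : 0 < A + z := by linarith
      have h2 : 0 < A + (z - 1) := by linarith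
      have e : (-z + 1) / (A + -(-z + 1)) - -z / (A + - -z) = A / ((A + z) * (A + (z - 1))) := by
        rw [show A + -(-z + 1) = A + (z - 1) by ring, neg_neg]
        field_simp; ring
      rw [e, neg_neg, ← mul_div_assoc, div_le_div_iff₀ (by positivity) (by positivity)]
      have : 0 ≤ A ^ 2 * (A + z) := by positivity
      nlinarith
  have hb : ∀ k : ℕ, |ψ k| ≤ 1 := by
    intro k
    simp only [hψ]
    rw [abs_div, abs_of_pos (hpos _), div_le_one (hpos _)]
    linarith
  calc _ ≤ ∑ k ∈ range N, 2 * A * (ψ (k + 1) - ψ k) := sum_le_sum fun k _ => hstep k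
    _ = 2 * A * (ψ N - ψ 0) := by rw [← mul_sum, sum_range_sub]
    _ ≤ 2 * A * 2 := by
        gcongr
        linarith [(abs_le.1 (hb N)).2, (abs_le.1 (hb 0)).1]
    _ = 4 * A := by ring

/-- If `m ≥ √(tn) / (2A)`, the kernel of `exists_kernel` decays at scale `A`, so its
`ℓ²` norm squared is `O(A)`. -/
lemma kernel_sq_sum_le (n t m : ℕ) (A : ℝ) (hA : 1 ≤ A) (hm : 1 ≤ m) (hn : 1 ≤ n)
    (htA : A ^ 2 ≤ t) (hmA : (t : ℝ) * n ≤ 4 * A ^ 2 * m ^ 2) (K : ℕ → ℝ)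
    (h0 : ∀ k ≤ n, 0 ≤ K k) (h1 : ∀ k ≤ n, K k ≤ 225)
    (h2 : ∀ k ≤ n, K k * ((k : ℝ) - t) ^ 2 * m ^ 2 ≤ 25 * n * (k + t)) :
    ∑ k ∈ range (n + 1), K k ^ 2 ≤ 1440000 * A := by
  have hn0 : (0 : ℝ) < n := by exact_mod_cast hn
  have hm0 : (0 : ℝ) < m := by exact_mod_cast hm
  have ht0 : (0 : ℝ) < t := by nlinarith
  have hk : ∀ k ∈ range (n + 1), K k ^ 2 ≤ 360000 * (A ^ 2 / (A + |(k : ℝ) - t|) ^ 2) := by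
    intro k hk
    have hkn : k ≤ n := by simpa [Nat.lt_succ_iff] using hk
    have a0 := h0 k hkn
    have a1 := h1 k hkn
    have a2 := h2 k hkn
    set j := |(k : ℝ) - t| with hj
    have hj0 : 0 ≤ j := abs_nonneg _
    have hjs : ((k : ℝ) - t) ^ 2 = j ^ 2 := (sq_abs _).symm
    have hkj : (k : ℝ) + t ≤ 2 * t + j := by linarith [le_abs_self ((k : ℝ) - t)]
    rw [hjs] at a2
    have hKj : K k * j ^ 2 ≤ 200 * A ^ 2 + 100 * j := by
      have b1 : K k * j ^ 2 * (t * n) ≤ K k * j ^ 2 * (4 * A ^ 2 * m ^ 2) := by gcongr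
      have b2 : 4 * A ^ 2 * (K k * j ^ 2 * m ^ 2) ≤ 4 * A ^ 2 * (25 * n * (2 * t + j)) := by
        refine mul_le_mul_of_nonneg_left (a2.trans ?_) (by positivity)
        gcongr
      have b3 : (K k * j ^ 2 * t) * n ≤ (100 * A ^ 2 * (2 * t + j)) * n := by nlinarith
      have b4 := le_of_mul_le_mul_right b3 hn0
      have b5 : A ^ 2 * j ≤ t * j := by gcongr
      have b6 : K k * j ^ 2 * t ≤ (200 * A ^ 2 + 100 * j) * t := by nlinarith
      exact le_of_mul_le_mul_right b6 ht0
    have hKA : K k * (A + j) ≤ 600 * A := by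
      rcases le_or_gt j A with h | h
      · nlinarith
      · have c1 : K k * j ^ 2 ≤ 300 * A * j := by nlinarith
        have c2 : K k * j ≤ 300 * A := by
          refine le_of_mul_le_mul_right (a := j) ?_ (by linarith)
          nlinarith
        nlinarith
    have hpos : 0 < A + j := by linarith
    rw [← mul_div_assoc, le_div_iff₀ (by positivity), ← mul_pow]
    calc (K k * (A + j)) ^ 2 ≤ (600 * A) ^ 2 := by gcongr
      _ = _ := by ring
  calc _ ≤ ∑ k ∈ range (n + 1), 360000 * (A ^ 2 / (A + |(k : ℝ) - t|) ^ 2) := sum_le_sum hk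
    _ ≤ 360000 * (4 * A) := by
        rw [← mul_sum]
        exact mul_le_mul_of_nonneg_left (sum_decay_le A hA t _) (by norm_num)
    _ = _ := by ring

/-- The main step: if `d < m ≈ √((s + 1) n) / A`, the discrete Legendre inequality for `q K`, with `K`
the localising kernel at `s + 1`, contradicts the size of its single term at `k = s`. -/
lemma degree_ge_of_scale (q : ℝ[X]) (n s m d : ℕ) (A : ℝ) (hA : 10 ^ 9 ≤ A) (hd : q.natDegree ≤ d)
    (hq : HasJump q n s) (hm : 1 ≤ m) (hs : A ^ 2 ≤ (s + 1 : ℕ)) (hsn : 2 * (s + 1) ≤ n + 1)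
    (h1 : A ^ 2 * m ^ 2 ≤ ((s + 1 : ℕ) : ℝ) * n)
    (h2 : ((s + 1 : ℕ) : ℝ) * n ≤ 4 * A ^ 2 * m ^ 2) : m ≤ d := by
  by_contra! hdm
  obtain ⟨hsn', hb, -, hjump, hsign⟩ := hq
  obtain ⟨K, hKd, hK1, hK⟩ := exists_kernel n (s + 1) m (by omega) hsn' hm
  have hS := kernel_sq_sum_le n (s + 1) m A (by linarith) hm (by omega) hs h2
    (fun k => K.eval (k : ℝ)) (fun k hk => (hK k hk).1) (fun k hk => (hK k hk).2.1)
    (fun k hk => (hK k hk).2.2)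
  have hL := legendre_ineq n (d + 2 * m) (q * K) (natDegree_mul_le.trans (add_le_add hd hKd))
  -- `1440000 A` bounds the squared norm of the kernel, and `16 / 9` bounds `q²`
  have hup : ∑ k ∈ range (n + 1), (q * K).eval (k : ℝ) ^ 2 ≤ 16 / 9 * (1440000 * A) := by
    refine le_trans ?_ (mul_le_mul_of_nonneg_left hS (by norm_num))
    rw [mul_sum]
    refine sum_le_sum fun k hk => ?_
    have hkn : k ≤ n := by simpa [Nat.lt_succ_iff] using hk
    rw [eval_mul, mul_pow]
    refine mul_le_mul_of_nonneg_right ?_ (sq_nonneg _)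
    rw [← sq_abs, show (16 / 9 : ℝ) = (4 / 3) ^ 2 by norm_num]
    have := hb k hkn
    gcongr
  -- `q` changes sign, `K ≥ 0` and `K (s + 1) = 1`, so the jump of `q K` at `s` is at least `2 / 3`
  have hlow : ((s : ℝ) + 1) * (n - s) * (4 / 9) ≤
      ∑ k ∈ range n, ((k : ℝ) + 1) * (n - k) *
        ((q * K).eval ((k : ℝ) + 1) - (q * K).eval (k : ℝ)) ^ 2 := by
    have hns : ∀ k ∈ range n, (0 : ℝ) ≤ n - k := by
      intro k hk
      have : (k : ℝ) ≤ n := by exact_mod_cast (mem_range.1 hk).le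
      linarith
    have hmem : s ∈ range n := mem_range.2 (by omega)
    refine le_trans ?_ (single_le_sum (f := fun k : ℕ => ((k : ℝ) + 1) * (n - k) *
      ((q * K).eval ((k : ℝ) + 1) - (q * K).eval (k : ℝ)) ^ 2) (fun k hk => ?_) hmem)
    · have := hns s hmem
      refine mul_le_mul_of_nonneg_left ?_ (by positivity)
      have hcast : (s : ℝ) + 1 = ((s + 1 : ℕ) : ℝ) := by push_cast; ring
      rw [eval_mul, eval_mul, hcast, hK1]
      have hκ := (hK s (by omega)).1
      have hsq : (2 / 3 : ℝ) ^ 2 ≤ |q.eval ((s + 1 : ℕ) : ℝ)| ^ 2 := by gcongr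
      rw [sq_abs] at hsq
      nlinarith [mul_nonneg hκ (neg_nonneg.2 hsign),
        sq_nonneg (q.eval (s : ℝ) * K.eval (s : ℝ))]
    · have := hns k hk
      positivity
  have hm0 : (1 : ℝ) ≤ m := by exact_mod_cast hm
  have hdm' : (d : ℝ) + 1 ≤ m := by exact_mod_cast hdm
  have hd0 : (0 : ℝ) ≤ d := by positivity
  push_cast at hL h1
  have he : ((d : ℝ) + 2 * m) * (d + 2 * m + 1) ≤ 9 * m ^ 2 := by nlinarith
  have hfin : ((s : ℝ) + 1) * (n - s) * (4 / 9) ≤ 9 * m ^ 2 * (16 / 9 * (1440000 * A)) := by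
    refine hlow.trans (hL.trans ?_)
    gcongr
  have hhalf : ((s : ℝ) + 1) * n ≤ ((s : ℝ) + 1) * (n - s) * 2 := by
    have : (2 : ℝ) * (s + 1) ≤ n + 1 := by exact_mod_cast hsn
    nlinarith [show (0 : ℝ) ≤ s by positivity]
  have hmm : (0 : ℝ) < m ^ 2 := by positivity
  -- `103680000 = 2 * (9 / 4) * 9 * (16 / 9) * 1440000` is less than `10 ^ 9`
  have hlast : A * (A * m ^ 2) ≤ 103680000 * (A * m ^ 2) := by nlinarith
  have hAm : 0 < A * (m : ℝ) ^ 2 := by positivity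
  have := le_of_mul_le_mul_right hlast hAm
  linarith

lemma degree_sq_ge_of_large (q : ℝ[X]) (n s d A : ℕ) (hA : 10 ^ 9 ≤ A) (hd : q.natDegree ≤ d)
    (hq : HasJump q n s) (hs : A ^ 2 ≤ s + 1) (hsn : 2 * (s + 1) ≤ n + 1) :
    (s + 1) * n ≤ 4 * A ^ 2 * d ^ 2 := by
  have hsn' := hq.1
  have hA0 : 0 < A := by omega
  set r := Nat.sqrt ((s + 1) * n) with hr
  set m := r / A with hm
  have hr1 : r * r ≤ (s + 1) * n := Nat.sqrt_le _
  have hr2 : (s + 1) * n < (r + 1) * (r + 1) := Nat.lt_succ_sqrt _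
  have hm1 : A * m ≤ r := Nat.mul_div_le r A
  have hm2 : r + 1 ≤ A * (m + 1) := Nat.lt_mul_div_succ r hA0
  have hAr : A ≤ r := by
    rw [hr, Nat.le_sqrt]
    nlinarith
  have hm0 : 1 ≤ m := (Nat.one_le_div_iff hA0).2 hAr
  have e1 : A ^ 2 * m ^ 2 ≤ (s + 1) * n := by
    calc A ^ 2 * m ^ 2 = (A * m) * (A * m) := by ring
      _ ≤ r * r := Nat.mul_le_mul hm1 hm1
      _ ≤ _ := hr1
  have e2 : (s + 1) * n ≤ 4 * A ^ 2 * m ^ 2 := by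
    have : r + 1 ≤ A * (2 * m) := hm2.trans (Nat.mul_le_mul_left _ (by omega))
    calc (s + 1) * n ≤ (r + 1) * (r + 1) := hr2.le
      _ ≤ (A * (2 * m)) * (A * (2 * m)) := Nat.mul_le_mul this this
      _ = _ := by ring
  have hmd := degree_ge_of_scale q n s m d A (by exact_mod_cast hA) hd hq hm0
    (by exact_mod_cast hs) hsn (by exact_mod_cast e1) (by exact_mod_cast e2)
  exact e2.trans (by gcongr)

lemma HasJump.natDegree_pos {q : ℝ[X]} {n s : ℕ} (hq : HasJump q n s) : 1 ≤ q.natDegree := by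
  by_contra! h
  obtain ⟨-, -, h1, -, h3⟩ := hq
  obtain ⟨c, rfl⟩ := natDegree_eq_zero.1 (by omega : q.natDegree = 0)
  simp only [eval_C] at h1 h3
  have : (2 / 3 : ℝ) ^ 2 ≤ |c| ^ 2 := by gcongr
  rw [sq_abs] at this
  nlinarith

/-- A jump in the left half of `[0, n]`. When `s + 1 < A²`, either `n` is bounded in terms of `A`, or
the quadratic substitution moves the jump to the middle of an interval of length about `2 √(n - s)`. -/
lemma degree_sq_ge_of_left (q : ℝ[X]) (n s d A : ℕ) (hA : 10 ^ 9 ≤ A) (hd : q.natDegree ≤ d)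
    (hq : HasJump q n s) (hsn : 2 * (s + 1) ≤ n + 1) :
    (s + 1) * (n - s) ≤ 36 * A ^ 6 * d ^ 2 := by
  have hd1 : 1 ≤ d := hq.natDegree_pos.trans hd
  have hA1 : 1 ≤ A := by omega
  have hd2 : 1 ≤ d ^ 2 := Nat.one_le_pow _ _ hd1
  rcases le_or_gt (A ^ 2) (s + 1) with hs | hs
  · have h := degree_sq_ge_of_large q n s d A hA hd hq hs hsn
    calc (s + 1) * (n - s) ≤ (s + 1) * n := Nat.mul_le_mul_left _ (by omega)
      _ ≤ 4 * A ^ 2 * d ^ 2 := h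
      _ ≤ 36 * A ^ 6 * d ^ 2 := by gcongr <;> omega
  · set J := Nat.sqrt (n - s) with hJ
    have hJ1 : J * J ≤ n - s := Nat.sqrt_le _
    have hJ2 : n - s < (J + 1) * (J + 1) := Nat.lt_succ_sqrt _
    rcases le_or_gt (A ^ 2) J with hAJ | hAJ
    · have hJ0 : 1 ≤ J := le_trans (Nat.one_le_pow _ _ hA1) hAJ
      obtain ⟨i, hi⟩ : ∃ i, J = i + 1 := ⟨J - 1, by omega⟩
      obtain ⟨-, hb, hj1, hj2, hsg⟩ := hq
      have hev : ∀ k : ℕ, (q.comp (C (s : ℝ) + (X - C (J : ℝ)) ^ 2)).eval (k : ℝ) =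
          q.eval ((s : ℝ) + (k - J) ^ 2) := fun k => by simp
      have hv1 : (q.comp (C (s : ℝ) + (X - C (J : ℝ)) ^ 2)).eval (i : ℝ) =
          q.eval ((s + 1 : ℕ) : ℝ) := by
        rw [hev, hi]; congr 1; push_cast; ring
      have hv2 : (q.comp (C (s : ℝ) + (X - C (J : ℝ)) ^ 2)).eval ((i + 1 : ℕ) : ℝ) =
          q.eval (s : ℝ) := by
        rw [hev, hi]; congr 1; push_cast; ring
      have hdeg : (q.comp (C (s : ℝ) + (X - C (J : ℝ)) ^ 2)).natDegree ≤ 2 * d := by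
        refine natDegree_comp_le.trans ?_
        have : (C (s : ℝ) + (X - C (J : ℝ)) ^ 2).natDegree ≤ 2 := by compute_degree
        calc _ ≤ d * 2 := Nat.mul_le_mul hd this
          _ = 2 * d := mul_comm _ _
      have hJump : HasJump (q.comp (C (s : ℝ) + (X - C (J : ℝ)) ^ 2)) (2 * J) i := by
        refine ⟨by omega, fun k hk => ?_, by rwa [hv1], by rwa [hv2], by rwa [hv1, hv2, mul_comm]⟩
        rw [hev]
        obtain ⟨a, ha, haJ⟩ : ∃ a : ℕ, ((k : ℝ) - J) ^ 2 = (a : ℝ) ^ 2 ∧ a ≤ J := by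
          rcases le_total k J with h | h
          · exact ⟨J - k, by rw [Nat.cast_sub h]; ring, by omega⟩
          · exact ⟨k - J, by rw [Nat.cast_sub h], by omega⟩
        rw [ha]
        have h3 : s + a ^ 2 ≤ n := by
          have : a ^ 2 ≤ J * J := by rw [pow_two]; exact Nat.mul_le_mul haJ haJ
          omega
        have := hb _ h3
        push_cast at this
        exact this
      have h := degree_sq_ge_of_large _ (2 * J) i (2 * d) A hA hdeg hJump (by omega) (by omega)
      rw [← hi] at h
      have h4 : n - s ≤ 32 * A ^ 2 * d ^ 2 := by nlinarith
      calc (s + 1) * (n - s) ≤ A ^ 2 * (32 * A ^ 2 * d ^ 2) := Nat.mul_le_mul hs.le h4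
        _ = 32 * A ^ 4 * d ^ 2 := by ring
        _ ≤ 36 * A ^ 6 * d ^ 2 := by gcongr <;> omega
    · have h4 : n - s ≤ A ^ 2 * A ^ 2 :=
        hJ2.le.trans (Nat.mul_le_mul hAJ hAJ)
      calc (s + 1) * (n - s) ≤ A ^ 2 * (A ^ 2 * A ^ 2) := Nat.mul_le_mul hs.le h4
        _ = 1 * A ^ 6 * 1 := by ring
        _ ≤ 36 * A ^ 6 * d ^ 2 := by gcongr; omega

/-- The univariate degree bound; a jump in the right half of `[0, n]` is reflected to the left. -/
lemma degree_sq_ge (q : ℝ[X]) (n s d A : ℕ) (hA : 10 ^ 9 ≤ A) (hd : q.natDegree ≤ d)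
    (hq : HasJump q n s) : (s + 1) * (n - s) ≤ 36 * A ^ 6 * d ^ 2 := by
  rcases le_or_gt (2 * (s + 1)) (n + 1) with h | h
  · exact degree_sq_ge_of_left q n s d A hA hd hq h
  · obtain ⟨hsn, hb, hj1, hj2, hsg⟩ := hq
    have hev : ∀ k : ℕ, k ≤ n → (q.comp (C (n : ℝ) - X)).eval (k : ℝ) =
        q.eval ((n - k : ℕ) : ℝ) := fun k hk => by simp [Nat.cast_sub hk]
    have hdeg : (q.comp (C (n : ℝ) - X)).natDegree ≤ d := by
      refine natDegree_comp_le.trans ?_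
      have : (C (n : ℝ) - X).natDegree ≤ 1 := by compute_degree
      calc _ ≤ d * 1 := Nat.mul_le_mul hd this
        _ = d := mul_one _
    have e1 : n - (n - 1 - s) = s + 1 := by omega
    have e2 : n - (n - 1 - s + 1) = s := by omega
    have hJump : HasJump (q.comp (C (n : ℝ) - X)) n (n - 1 - s) := by
      refine ⟨by omega, fun k hk => ?_, ?_, ?_, ?_⟩
      · rw [hev k hk]; exact hb _ (by omega)
      · rw [hev _ (by omega), e1]; exact hj2
      · rw [hev _ (by omega), e2]; exact hj1
      · rw [hev _ (by omega), hev _ (by omega), e1, e2, mul_comm]; exact hsg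
    have := degree_sq_ge_of_left _ n (n - 1 - s) d A hA hdeg hJump (by omega)
    rwa [e1, show n - 1 - s + 1 = n - s by omega, mul_comm] at this

/-! ### Symmetrisation -/

/-- The vertex of the cube whose set of `-1` coordinates is `A`. -/
def cubePt {n : ℕ} (A : Finset (Fin n)) : Fin n → ℝ := fun i => if i ∈ A then -1 else 1

/-- Expansion of a parity over indicators, from `x_i = 1 - 2 · [i ∈ A]`. -/
lemma prod_cubePt {n : ℕ} (A S : Finset (Fin n)) :
    ∏ i ∈ S, cubePt A i = ∑ T ∈ S.powerset, if T ⊆ A then (-2 : ℝ) ^ #T else 0 := by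
  have h : ∀ i ∈ S, cubePt A i = 1 + (if i ∈ A then (-2 : ℝ) else 0) := by
    intro i _
    unfold cubePt
    split_ifs <;> norm_num
  rw [Finset.prod_congr rfl h, Finset.prod_one_add]
  refine Finset.sum_congr rfl fun T _ => ?_
  by_cases hT : T ⊆ A
  · rw [if_pos hT, Finset.prod_congr rfl (fun i hi => if_pos (hT hi)), Finset.prod_const]
  · rw [if_neg hT]
    obtain ⟨i, hi, hiA⟩ := Finset.not_subset.mp hT
    exact Finset.prod_eq_zero hi (if_neg hiA)

/-- The averages of `g` over the `k`-subsets of `Fin n`, as a function of `k`, are the values of a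
univariate polynomial of degree at most `d`. The average is multiplied by `C(n, k)` to avoid a
division. -/
def Averages {n : ℕ} (g : Finset (Fin n) → ℝ) (d : ℕ) : Prop :=
  ∃ q : ℝ[X], q.natDegree ≤ d ∧
    ∀ k ≤ n, q.eval (k : ℝ) * (n.choose k : ℝ) = ∑ A ∈ powersetCard k univ, g A

lemma Averages.sum {n d : ℕ} {ι : Type*} (s : Finset ι) (g : ι → Finset (Fin n) → ℝ)
    (h : ∀ i ∈ s, Averages (g i) d) : Averages (fun A => ∑ i ∈ s, g i A) d := by
  choose! q hq using h
  refine ⟨∑ i ∈ s, q i, natDegree_sum_le_of_forall_le _ _ fun i hi => (hq i hi).1, ?_⟩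
  intro k hk
  rw [eval_finsetSum, Finset.sum_mul, Finset.sum_comm]
  exact Finset.sum_congr rfl fun i hi => (hq i hi).2 k hk

lemma Averages.const_mul {n d : ℕ} {g : Finset (Fin n) → ℝ} (c : ℝ) (h : Averages g d) :
    Averages (fun A => c * g A) d := by
  obtain ⟨q, hq, hk⟩ := h
  refine ⟨C c * q, (natDegree_C_mul_le _ _).trans hq, fun k hkn => ?_⟩
  rw [eval_mul, eval_C, mul_assoc, hk k hkn, Finset.mul_sum]

/-- A random `k`-subset contains `T` with probability `C(k, #T) / C(n, #T)`, a polynomial in `k`. -/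
lemma averages_subset {n d : ℕ} (T : Finset (Fin n)) (hT : #T ≤ d) (c : ℝ) :
    Averages (fun A => if T ⊆ A then c else 0) d := by
  have hTn : #T ≤ n := by simpa using Finset.card_le_univ T
  have hpos : (0 : ℝ) < (n.choose #T : ℝ) := by exact_mod_cast Nat.choose_pos hTn
  refine ⟨C (c / (n.choose #T * (#T).factorial)) * descPochhammer ℝ #T,
    (natDegree_C_mul_le _ _).trans ((descPochhammer_natDegree ℝ #T).le.trans hT), ?_⟩
  intro k hk
  have hcount : #((powersetCard k univ).filter (T ⊆ ·)) * n.choose #T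
      = n.choose k * k.choose #T := by
    by_cases h : #T ≤ k
    · rw [Finset.card_filter_powersetCard_subset T univ k (Finset.subset_univ _) h,
        Nat.choose_mul h, mul_comm]
      simp
    · have h0 : (powersetCard k univ).filter (T ⊆ ·) = ∅ := by
        refine Finset.filter_eq_empty_iff.mpr fun A hA hTA => h ?_
        rw [← (Finset.mem_powersetCard.mp hA).2]
        exact Finset.card_le_card hTA
      rw [h0, Nat.choose_eq_zero_of_lt (not_le.mp h)]
      simp
  have hcount' : (#((powersetCard k univ).filter (T ⊆ ·)) : ℝ) * (n.choose #T : ℝ)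
      = (n.choose k : ℝ) * (k.choose #T : ℝ) := by exact_mod_cast hcount
  rw [← Finset.sum_filter, Finset.sum_const, nsmul_eq_mul, eval_mul, eval_C,
    descPochhammer_eval_eq_descFactorial, Nat.descFactorial_eq_factorial_mul_choose]
  have hf : (0 : ℝ) < ((#T).factorial : ℝ) := by exact_mod_cast Nat.factorial_pos _
  push_cast
  field_simp
  linear_combination (-c) * hcount'

/-- Minsky–Papert symmetrisation: on the cube a monomial is the parity of its odd-exponent variables,
and parities expand over the indicators `T ⊆ A`. -/
lemma symmetrize {n d : ℕ} (p : MvPolynomial (Fin n) ℝ) (hp : p.totalDegree ≤ d) :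
    Averages (fun A => MvPolynomial.eval (cubePt A) p) d := by
  have hmon : ∀ m ∈ p.support, Averages
      (fun A => MvPolynomial.coeff m p * ∏ i, cubePt A i ^ m i) d := by
    intro m hm
    refine Averages.const_mul _ ?_
    set S : Finset (Fin n) := univ.filter (fun i => Odd (m i)) with hS
    have hcard : #S ≤ d := by
      have h1 : #S ≤ ∑ i, m i := by
        rw [Finset.card_eq_sum_ones]
        refine (Finset.sum_le_sum fun i hi => ?_).trans
          (Finset.sum_le_sum_of_subset (Finset.subset_univ S))
        exact (Finset.mem_filter.mp hi).2.pos
      have h2 := MvPolynomial.le_totalDegree hm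
      rw [Finsupp.sum_fintype _ _ (fun _ => rfl)] at h2
      omega
    have heq : (fun A : Finset (Fin n) => ∏ i, cubePt A i ^ m i)
        = fun A => ∑ T ∈ S.powerset, if T ⊆ A then (-2 : ℝ) ^ #T else 0 := by
      funext A
      rw [← prod_cubePt, hS, Finset.prod_filter]
      refine Finset.prod_congr rfl fun i _ => ?_
      unfold cubePt
      split_ifs with h1 h2 h2
      · exact h2.neg_one_pow
      · exact (Nat.not_odd_iff_even.mp h2).neg_one_pow
      · simp
      · simp
    rw [heq]
    refine Averages.sum _ _ fun T hT => averages_subset T ?_ _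
    exact (Finset.card_le_card (Finset.mem_powerset.mp hT)).trans hcard
  have := Averages.sum _ _ hmon
  simpa only [MvPolynomial.eval_eq'] using this

/-- Every function on the cube is represented exactly by a polynomial. -/
lemma exists_interpolant {n : ℕ} (f : (Fin n → ℝ) → ℝ) :
    ∃ p : MvPolynomial (Fin n) ℝ, ∀ x : Fin n → ℝ, (∀ i, x i = 1 ∨ x i = -1) →
      MvPolynomial.eval x p = f x := by
  refine ⟨∑ A : Finset (Fin n), MvPolynomial.C (f (cubePt A)) *
    ∏ i, (MvPolynomial.C (1 / 2) * (1 + MvPolynomial.C (cubePt A i) * MvPolynomial.X i)), ?_⟩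
  intro x hx
  obtain ⟨B, rfl⟩ : ∃ B : Finset (Fin n), x = cubePt B := by
    refine ⟨univ.filter (fun i => x i = -1), funext fun i => ?_⟩
    rcases hx i with h | h
    · simp [cubePt, h]
    · simp [cubePt, h]
  rw [map_sum, Finset.sum_eq_single B]
  · rw [map_mul, map_prod, MvPolynomial.eval_C, Finset.prod_eq_one, mul_one]
    intro i _
    simp only [map_mul, map_add, map_one, MvPolynomial.eval_C, MvPolynomial.eval_X]
    unfold cubePt
    split_ifs <;> norm_num
  · intro A _ hAB
    obtain ⟨i, hi⟩ : ∃ i, ¬ (i ∈ A ↔ i ∈ B) := by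
      by_contra! h
      exact hAB (Finset.ext h)
    rw [map_mul, map_prod, Finset.prod_eq_zero (Finset.mem_univ i), mul_zero]
    simp only [map_mul, map_add, map_one, MvPolynomial.eval_C, MvPolynomial.eval_X]
    unfold cubePt
    by_cases h1 : i ∈ A <;> by_cases h2 : i ∈ B <;> simp_all
  · simp

lemma cubePt_eq {n : ℕ} (A : Finset (Fin n)) (i : Fin n) : cubePt A i = 1 ∨ cubePt A i = -1 := by
  unfold cubePt
  split_ifs <;> simp

lemma filter_cubePt {n : ℕ} (A : Finset (Fin n)) : univ.filter (fun i => cubePt A i = -1) = A := by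
  ext i
  by_cases h : i ∈ A
  · simp [cubePt, h]
  · have h1 : ¬ ((1 : ℝ) = -1) := by norm_num
    simp [cubePt, h, h1]

/-- An approximating polynomial of degree `approxDeg f ε` symmetrises to one of the predicate. -/
lemma exists_univariate {n : ℕ} (f : (Fin n → ℝ) → ℝ) (F : ℕ → ℝ) (ε : ℝ) (hε : 0 ≤ ε)
    (hF : ∀ x : Fin n → ℝ, (∀ i, x i = 1 ∨ x i = -1) →
      f x = F (univ.filter (fun i => x i = -1)).card) :
    ∃ q : ℝ[X], q.natDegree ≤ approxDeg f ε ∧ ∀ k ≤ n, |q.eval (k : ℝ) - F k| ≤ ε := by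
  -- the infimum defining `approxDeg` is attained because its set is nonempty
  obtain ⟨p, hpd, hp⟩ : approxDeg f ε ∈ {d : ℕ | ∃ p : MvPolynomial (Fin n) ℝ, p.totalDegree ≤ d ∧
      ∀ x : Fin n → ℝ, (∀ i, x i = 1 ∨ x i = -1) → |MvPolynomial.eval x p - f x| ≤ ε} := by
    refine Nat.sInf_mem ?_
    obtain ⟨p, hp⟩ := exists_interpolant f
    exact ⟨p.totalDegree, p, le_rfl, fun x hx => by rw [hp x hx, sub_self, abs_zero]; exact hε⟩
  obtain ⟨q, hqd, hq⟩ := symmetrize p hpd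
  refine ⟨q, hqd, fun k hk => ?_⟩
  have hpos : (0 : ℝ) < n.choose k := by exact_mod_cast Nat.choose_pos hk
  have hcard : #(powersetCard k (univ : Finset (Fin n))) = n.choose k := by simp
  have hsum : (q.eval (k : ℝ) - F k) * n.choose k =
      ∑ A ∈ powersetCard k univ, (MvPolynomial.eval (cubePt A) p - F k) := by
    rw [sub_mul, hq k hk, sum_sub_distrib, sum_const, hcard, nsmul_eq_mul, mul_comm (F k)]
  have hle : |(q.eval (k : ℝ) - F k) * n.choose k| ≤ ε * n.choose k := by
    rw [hsum]
    refine (abs_sum_le_sum_abs _ _).trans ((sum_le_card_nsmul _ _ ε fun A hA => ?_).trans_eq ?_)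
    · have h := hp _ (cubePt_eq A)
      rwa [hF _ (cubePt_eq A), filter_cubePt, (mem_powersetCard.1 hA).2] at h
    · rw [hcard, nsmul_eq_mul, mul_comm]
  rw [abs_mul, abs_of_pos hpos] at hle
  exact le_of_mul_le_mul_right hle hpos

/-- The predicate of a Boolean function is Boolean on `{0, …, n}`. -/
lemma predicate_eq {n : ℕ} (f : (Fin n → ℝ) → ℝ) (F : ℕ → ℝ)
    (hf : ∀ x : Fin n → ℝ, (∀ i, x i = 1 ∨ x i = -1) → f x = 1 ∨ f x = -1)
    (hF : ∀ x : Fin n → ℝ, (∀ i, x i = 1 ∨ x i = -1) →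
      f x = F (univ.filter (fun i => x i = -1)).card) (k : ℕ) (hk : k ≤ n) :
    F k = 1 ∨ F k = -1 := by
  obtain ⟨A, -, hA⟩ := exists_subset_card_eq (s := (univ : Finset (Fin n))) (n := k) (by simpa)
  have h := hf _ (cubePt_eq A)
  rwa [hF _ (cubePt_eq A), filter_cubePt, hA] at h

lemma hasJump_of_approx (q : ℝ[X]) (F : ℕ → ℝ) (n s : ℕ) (hs : s + 1 ≤ n)
    (hF : ∀ k ≤ n, F k = 1 ∨ F k = -1) (hq : ∀ k ≤ n, |q.eval (k : ℝ) - F k| ≤ 1 / 3)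
    (hne : F s ≠ F (s + 1)) : HasJump q n s := by
  have hlow : ∀ k ≤ n, 2 / 3 ≤ |q.eval (k : ℝ)| := by
    intro k hk
    have h := abs_le.1 (hq k hk)
    rcases hF k hk with h1 | h1 <;> rw [h1] at h
    · exact le_abs.2 (Or.inl (by linarith [h.1]))
    · exact le_abs.2 (Or.inr (by linarith [h.2]))
  refine ⟨hs, fun k hk => ?_, hlow s (by omega), hlow (s + 1) hs, ?_⟩
  · have h := abs_le.1 (hq k hk)
    rcases hF k hk with h1 | h1 <;> rw [h1] at h <;> rw [abs_le] <;>
      constructor <;> linarith [h.1, h.2]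
  · have h := abs_le.1 (hq s (by omega))
    have h' := abs_le.1 (hq (s + 1) hs)
    rcases hF s (by omega) with h1 | h1 <;> rcases hF (s + 1) hs with h2 | h2 <;>
      rw [h1] at h <;> rw [h2] at h'
    · exact absurd (h1.trans h2.symm) hne
    · exact mul_nonpos_of_nonneg_of_nonpos (by linarith [h.1]) (by linarith [h'.2])
    · exact mul_nonpos_of_nonpos_of_nonneg (by linarith [h.2]) (by linarith [h'.1])
    · exact absurd (h1.trans h2.symm) hne

end Helpers

theorem stmt6 :
    ∃ c : ℝ, c > 0 ∧
      ∀ (n : ℕ), 1 ≤ n →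
      ∀ (f : (Fin n → ℝ) → ℝ) (F : ℕ → ℝ),
        (∀ x : Fin n → ℝ, (∀ i, x i = 1 ∨ x i = -1) → f x = 1 ∨ f x = -1) →
        (∀ x : Fin n → ℝ, (∀ i, x i = 1 ∨ x i = -1) →
          f x = F (Finset.univ.filter (fun i => x i = -1)).card) →
        ∀ t : ℕ, 1 ≤ t → t ≤ n → F (t - 1) ≠ F t →
          (approxDeg f (1/3) : ℝ) ≥ c * Real.sqrt (t * ((n : ℝ) - t + 1)) := by
  -- `degree_sq_ge` with `A = 10 ^ 9` gives `t (n - t + 1) ≤ 36 A ^ 6 d² = (6 A ^ 3 d)²`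
  refine ⟨1 / (6 * (10 ^ 9) ^ 3), by norm_num, ?_⟩
  intro n _ f F hf hF t ht htn hne
  obtain ⟨s, rfl⟩ : ∃ s, t = s + 1 := ⟨t - 1, by omega⟩
  rw [Nat.add_sub_cancel] at hne
  obtain ⟨q, hqd, hq⟩ := exists_univariate f F (1 / 3) (by norm_num) hF
  have hJ := hasJump_of_approx q F n s htn (predicate_eq f F hf hF) hq hne
  have h := degree_sq_ge q n s _ (10 ^ 9) le_rfl hqd hJ
  generalize approxDeg f (1 / 3) = d at h
  have hR : ((s : ℝ) + 1) * (n - s) ≤ 36 * (10 ^ 9) ^ 6 * (d : ℝ) ^ 2 := by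
    have h' : (((s + 1) * (n - s) : ℕ) : ℝ) ≤ ((36 * (10 ^ 9) ^ 6 * d ^ 2 : ℕ) : ℝ) :=
      Nat.cast_le.2 h
    rw [Nat.cast_mul, Nat.cast_sub (by omega)] at h'
    push_cast at h'
    linarith
  have hsqrt : Real.sqrt (((s + 1 : ℕ) : ℝ) * ((n : ℝ) - ((s + 1 : ℕ) : ℝ) + 1)) ≤
      6 * (10 ^ 9) ^ 3 * d := by
    refine Real.sqrt_le_iff.2 ⟨by positivity, ?_⟩
    push_cast
    linarith
  rw [ge_iff_le, one_div, inv_mul_le_iff₀ (by norm_num)]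
  exact hsqrt
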